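/- Let (A, φ) be a noncommutative probability space with free cumulants {r_n}. Then for every n ≥ 1 and all a_1,…,a_n ∈ A, r_n(a_1,…,a_n) = Σ_{t ∈ PST(n)} (−1)^{i(t)−1} φ_{π(t)}(a_1,…,a_n), where PST(n) is the set of Schröder trees with n+1 leaves whose leftmost child of the root is a leaf. -/

import Mathlib

open scoped BigOperators

/-- Planar rooted trees (rose trees). -/
inductive PTree : Type
  | node : List PTree → PTree

namespace PTree

/-- The single-vertex tree (a leaf). -/
abbrev leaf : PTree := .node []

/-- Subtree at a given path from the root (entries select children). -/
def subtreeAt : List ℕ → PTree → Option PTree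
  | [], t => some t
  | i :: p, node cs => (cs[i]?).bind (subtreeAt p)

/-- `p` is (the path of) a vertex of `t`. -/
def IsVertex (t : PTree) (p : List ℕ) : Prop := (subtreeAt p t).isSome

/-- `p` is a leaf of `t`. -/
def IsLeafAt (t : PTree) (p : List ℕ) : Prop := subtreeAt p t = some leaf

/-- `p` is an internal (non-leaf) vertex of `t`. -/
def IsInternalAt (t : PTree) (p : List ℕ) : Prop :=
  ∃ cs, subtreeAt p t = some (node cs) ∧ cs ≠ []

/-- Schröder trees: every internal vertex has at least two children. -/
inductive IsSchroder : PTree → Prop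
  | leaf : IsSchroder (node [])
  | node (cs : List PTree) : 2 ≤ cs.length → (∀ c ∈ cs, IsSchroder c) → IsSchroder (node cs)

/-- Number of leaves of a tree. -/
noncomputable def numLeaves (t : PTree) : ℕ := Nat.card {p : List ℕ // IsLeafAt t p}

/-- Number of sectors between consecutive leaves. -/
noncomputable def numSectors (t : PTree) : ℕ := numLeaves t - 1

/-- Number of internal vertices. -/
noncomputable def numInternal (t : PTree) : ℕ := Nat.card {p : List ℕ // IsInternalAt t p}

/-- The set of Schröder trees with `n+1` leaves. -/
def ST (n : ℕ) : Set PTree := {t | IsSchroder t ∧ numLeaves t = n + 1}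

/-- Number of surjective strictly order-preserving maps from the poset of internal
vertices of `t` (i.e. the vertex poset of the skeleton `sk(t)`, with the root minimal,
the order being the ancestor/prefix order) onto `{1, …, k}`. This is `ω_k(sk(t))`. -/
noncomputable def omegaSkK (t : PTree) (k : ℕ) : ℕ :=
  Nat.card {f : {p : List ℕ // IsInternalAt t p} → Fin k //
    Function.Surjective f ∧ ∀ v w, v.1 <+: w.1 → v ≠ w → f v < f w}

/-- The Murua coefficient `ω(sk(t))` of the skeleton of `t`. -/
noncomputable def omegaSk (t : PTree) : ℂ :=
  ∑ k ∈ Finset.Icc 1 (numInternal t), ((-1 : ℂ) ^ (k + 1) / (k : ℂ)) * (omegaSkK t k : ℂ)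

/-- The subtree of `t` at path `p` (junk value: a leaf). -/
noncomputable def subtree! (t : PTree) (p : List ℕ) : PTree := (subtreeAt p t).getD leaf

/-- Number of leaves of `t` strictly to the left of the subtree at `p`. -/
noncomputable def leavesBefore (t : PTree) (p : List ℕ) : ℕ :=
  Nat.card {q : List ℕ // IsLeafAt t q ∧ List.Lex (· < ·) q p ∧ ¬ p <+: q}

/-- Sector number `i` (0-indexed: the sector between the `(i+1)`-st and `(i+2)`-nd leaves of `t`)
lies strictly inside the subtree of `t` rooted at `p`. -/
def SectorIn (t : PTree) (p : List ℕ) (i : ℕ) : Prop :=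
  leavesBefore t p ≤ i ∧ i + 2 ≤ leavesBefore t p + numLeaves (subtree! t p)

/-- The internal vertex `v` of `t` owns sector `i`: the sector lies in the corolla at `v`,
i.e. inside the subtree at `v` but not inside the subtree at any strictly deeper vertex. -/
def OwnsSector (t : PTree) (v : List ℕ) (i : ℕ) : Prop :=
  IsInternalAt t v ∧ SectorIn t v i ∧
    ∀ w, IsInternalAt t w → v <+: w → w ≠ v → ¬ SectorIn t w i

/-- Sectors `i` and `j` belong to the same block of the noncrossing partition `π(t)`. -/
def SameOwner (t : PTree) (i j : ℕ) : Prop := ∃ v, OwnsSector t v i ∧ OwnsSector t v j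

open Classical in
/-- `φ_{π(t)}(a_1,…,a_n)`: the product over the blocks of the noncrossing partition `π(t)`
(one block per internal vertex `v`, consisting of the sectors owned by `v`) of `φ` applied to
the ordered product of the corresponding letters of `w`. -/
noncomputable def phiPi {A : Type*} [Ring A] (φ : A → ℂ) (t : PTree) (w : List A) : ℂ :=
  ∏ᶠ v ∈ {v : List ℕ | IsInternalAt t v},
    φ ((((List.range w.length).filter fun i => OwnsSector t v i).map fun i => w.getD i 0).prod)

/-- A corolla: a root whose (at least two) children are all leaves. -/
def corolla (m : ℕ) : PTree := node (List.replicate m leaf)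

/-- `t` is a corolla. -/
def IsCorolla (t : PTree) : Prop := ∃ m, 2 ≤ m ∧ t = corolla m

/-- Graft a tree `s` onto the leftmost leaf of `t`. -/
def graftLeftmost : PTree → PTree → PTree
  | node [], s => s
  | node (c :: cs), s => node (graftLeftmost c s :: cs)

/-- Trees obtained from the single-vertex tree by repeatedly grafting a corolla
onto the leftmost leaf. -/
inductive IsBST : PTree → Prop
  | single : IsBST leaf
  | graft (t : PTree) (m : ℕ) : IsBST t → 2 ≤ m → IsBST (graftLeftmost t (corolla m))

/-- Schröder trees whose leftmost child of the root is a leaf. -/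
def IsPST (t : PTree) : Prop := ∃ cs, t = node (leaf :: cs)

end PTree
section Partitions

open scoped BigOperators

/-- Set partitions of `[n] = {1,…,n}`, modeled as finpartitions of `Fin n`. -/
abbrev NPart (n : ℕ) := Finpartition (Finset.univ : Finset (Fin n))

/-- Noncrossing partitions: there are no `a < b < c < d` with `a, c` in one block and
`b, d` in a different block. -/
def IsNoncrossing {n : ℕ} (π : NPart n) : Prop :=
  ∀ a b c d : Fin n, a < b → b < c → c < d →
    ∀ V ∈ π.parts, ∀ W ∈ π.parts, a ∈ V → c ∈ V → b ∈ W → d ∈ W → V = W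

/-- Interval partitions: every block is an interval of consecutive elements. -/
def IsIntervalPart {n : ℕ} (π : NPart n) : Prop :=
  ∀ V ∈ π.parts, ∀ x ∈ V, ∀ y ∈ V, ∀ z : Fin n, x ≤ z → z ≤ y → z ∈ V

/-- Irreducible noncrossing partitions: `1` and `n` lie in the same block. -/
def IsIrreducibleNC {n : ℕ} (π : NPart n) : Prop :=
  ∃ V ∈ π.parts, (∀ i : Fin n, i.val = 0 → i ∈ V) ∧ (∀ i : Fin n, i.val = n - 1 → i ∈ V)

/-- `W` is nested in `V`: every element of `W` lies in the interval `[min V, max V]`. -/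
def NestedIn {n : ℕ} (W V : Finset (Fin n)) : Prop :=
  ∀ w ∈ W, (∃ a ∈ V, a ≤ w) ∧ (∃ b ∈ V, w ≤ b)

open Classical in
/-- The forest factorial `t(π)!` of the forest of nestings of `π`: the product, over all
blocks `V`, of the number of blocks nested in `V` (the size of the subtree rooted at `V`). -/
noncomputable def forestFactorial {n : ℕ} (π : NPart n) : ℕ :=
  ∏ V ∈ π.parts, (π.parts.filter fun W => NestedIn W V).card

/-- `f_π(a_1,…,a_n)`: the product over the blocks `V = {i_1 < … < i_s}` of `π` of
`f(a_{i_1},…,a_{i_s})`, for a family of multilinear functionals encoded as `f : List A → ℂ`. -/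
noncomputable def blockApply {A : Type*} {n : ℕ} (f : List A → ℂ) (a : Fin n → A)
    (π : NPart n) : ℂ :=
  ∏ V ∈ π.parts, f ((V.sort (· ≤ ·)).map a)

/-- `φ_π(a_1,…,a_n)` for the moment functionals `φ_m(a_1,…,a_m) = φ(a_1 ⋯ a_m)`. -/
noncomputable def momApply {A : Type*} [Ring A] {n : ℕ} (φ : A → ℂ) (a : Fin n → A)
    (π : NPart n) : ℂ :=
  blockApply (fun l => φ l.prod) a π

/-- `ω_k(t(π))` for the nesting poset of the blocks of `π` (for irreducible `π`, this is
the vertex poset of the tree of nestings, rooted at the outermost block): the number of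
surjective strictly order-preserving maps onto `{1,…,k}`. -/
noncomputable def omegaNestK {n : ℕ} (π : NPart n) (k : ℕ) : ℕ :=
  Nat.card {f : {V // V ∈ π.parts} → Fin k // Function.Surjective f ∧
    ∀ V W : {V // V ∈ π.parts}, NestedIn W.1 V.1 → V ≠ W → f V < f W}

/-- The Murua coefficient `ω(t(π))` of the tree (forest) of nestings of `π`. -/
noncomputable def omegaNest {n : ℕ} (π : NPart n) : ℂ :=
  ∑ k ∈ Finset.Icc 1 π.parts.card, ((-1 : ℂ) ^ (k + 1) / (k : ℂ)) * (omegaNestK π k : ℂ)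

/-- The noncrossing partition `π(t)` associated to a Schröder tree `t ∈ ST(n)` equals `π`:
two sectors lie in the same block of `π(t)` (i.e. have the same owning internal vertex)
iff they lie in the same block of `π`. -/
def TreePartEq {n : ℕ} (t : PTree) (π : NPart n) : Prop :=
  ∀ i j : Fin n, PTree.SameOwner t i.val j.val ↔ ∃ V ∈ π.parts, i ∈ V ∧ j ∈ V

/-- The moment–cumulant relation defining the monotone cumulants `h`. -/
def MonotoneMC {A : Type*} [Ring A] (φ : A → ℂ) (h : List A → ℂ) : Prop :=
  ∀ (m : ℕ), 1 ≤ m → ∀ a : Fin m → A,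
    φ (List.ofFn a).prod =
      ∑ᶠ π ∈ {π : NPart m | IsNoncrossing π}, (forestFactorial π : ℂ)⁻¹ * blockApply h a π

/-- The moment–cumulant relation defining the free cumulants `r`. -/
def FreeMC {A : Type*} [Ring A] (φ : A → ℂ) (r : List A → ℂ) : Prop :=
  ∀ (m : ℕ), 1 ≤ m → ∀ a : Fin m → A,
    φ (List.ofFn a).prod = ∑ᶠ π ∈ {π : NPart m | IsNoncrossing π}, blockApply r a π

/-- The moment–cumulant relation defining the Boolean cumulants `b`. -/
def BooleanMC {A : Type*} [Ring A] (φ : A → ℂ) (b : List A → ℂ) : Prop :=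
  ∀ (m : ℕ), 1 ≤ m → ∀ a : Fin m → A,
    φ (List.ofFn a).prod = ∑ᶠ π ∈ {π : NPart m | IsIntervalPart π}, blockApply b a π

end Partitions

/-! ### Functionals on words: concatenation product and substitution -/

section Words

variable {A : Type*}

/-- The left derivative of a functional on words. -/
def wordDeriv (x : A) (F : List A → ℂ) : List A → ℂ := fun w => F (x :: w)

/-- The unit of the concatenation product. -/
def wordUnit : List A → ℂ
  | [] => 1
  | _ :: _ => 0

/-- The concatenation (Cauchy) product of functionals on words. -/
def wordConv (F G : List A → ℂ) (w : List A) : ℂ :=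
  ∑ i ∈ Finset.range (w.length + 1), F (w.take i) * G (w.drop i)

/-- `F` with every letter followed by an inserted gap weighted by `G`. -/
def wordSubst (F G : List A → ℂ) : List A → ℂ
  | [] => F []
  | x :: w => ∑ i ∈ Finset.range (w.length + 1),
      G (w.take i) * wordSubst (wordDeriv x F) G (w.drop i)
termination_by w => w.length
decreasing_by simp

lemma wordSubst_nil (F G : List A → ℂ) : wordSubst F G [] = F [] := by
  rw [wordSubst]

lemma wordSubst_cons (F G : List A → ℂ) (x : A) (w : List A) :
    wordSubst F G (x :: w) = wordConv G (wordSubst (wordDeriv x F) G) w := by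
  rw [wordSubst, wordConv]

lemma wordConv_nil (F G : List A → ℂ) : wordConv F G [] = F [] * G [] := by
  simp [wordConv]

lemma wordConv_cons (F G : List A → ℂ) (x : A) (w : List A) :
    wordConv F G (x :: w) = F [] * G (x :: w) + wordConv (wordDeriv x F) G w := by
  simp only [wordConv, List.length_cons]
  rw [Finset.sum_range_succ']
  simp [wordDeriv, add_comm]

lemma wordConv_congr {F F' G G' : List A → ℂ} {w : List A}
    (hF : ∀ u, u.length ≤ w.length → F u = F' u)
    (hG : ∀ u, u.length ≤ w.length → G u = G' u) :
    wordConv F G w = wordConv F' G' w := by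
  refine Finset.sum_congr rfl fun i _ => ?_
  rw [hF _ (by simp), hG _ (by simp)]

lemma wordConv_add_left (F F' G : List A → ℂ) (w : List A) :
    wordConv (fun u => F u + F' u) G w = wordConv F G w + wordConv F' G w := by
  simp [wordConv, add_mul, Finset.sum_add_distrib]

lemma wordConv_smul_left (c : ℂ) (F G : List A → ℂ) (w : List A) :
    wordConv (fun u => c * F u) G w = c * wordConv F G w := by
  simp [wordConv, Finset.mul_sum, mul_assoc]

lemma wordConv_add_right (F G G' : List A → ℂ) (w : List A) :
    wordConv F (fun u => G u + G' u) w = wordConv F G w + wordConv F G' w := by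
  simp [wordConv, mul_add, Finset.sum_add_distrib]

lemma wordConv_smul_right (c : ℂ) (F G : List A → ℂ) (w : List A) :
    wordConv F (fun u => c * G u) w = c * wordConv F G w := by
  simp [wordConv, Finset.mul_sum, mul_left_comm]

lemma wordDeriv_wordConv (x : A) (F G : List A → ℂ) :
    wordDeriv x (wordConv F G) =
      fun w => F [] * wordDeriv x G w + wordConv (wordDeriv x F) G w := by
  funext w
  exact wordConv_cons F G x w

lemma wordConv_assoc (F G H : List A → ℂ) (w : List A) :
    wordConv (wordConv F G) H w = wordConv F (wordConv G H) w := by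
  induction w generalizing F G with
  | nil => simp [wordConv_nil, mul_assoc]
  | cons x w ih =>
    rw [wordConv_cons, wordDeriv_wordConv, wordConv_add_left, wordConv_smul_left, ih,
      wordConv_cons F, wordConv_cons G, wordConv_nil]
    ring

lemma wordConv_unit_left (F : List A → ℂ) (w : List A) : wordConv wordUnit F w = F w := by
  rw [wordConv, Finset.sum_range_succ', Finset.sum_eq_zero]
  · simp [wordUnit]
  · intro i hi
    have : i < w.length := by simpa using hi
    rw [List.take_add_one, List.getElem?_eq_getElem this]
    cases h : w.take i <;> simp [wordUnit]

lemma wordSubst_linear (c : ℂ) (F F' G : List A → ℂ) (w : List A) :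
    wordSubst (fun u => c * F u + F' u) G w = c * wordSubst F G w + wordSubst F' G w := by
  induction h : w.length using Nat.strong_induction_on generalizing w F F' with
  | _ n ih =>
  cases w with
  | nil => simp [wordSubst_nil]
  | cons x w =>
    simp only [wordSubst_cons]
    rw [← wordConv_smul_right, ← wordConv_add_right]
    refine wordConv_congr (fun _ _ => rfl) fun u hu => ?_
    exact ih u.length (by simp at h; omega) _ _ u rfl

lemma wordSubst_wordConv (F H G : List A → ℂ) (w : List A) :
    wordSubst (wordConv F H) G w = wordConv (wordSubst F G) (wordSubst H G) w := by
  induction h : w.length using Nat.strong_induction_on generalizing w F H with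
  | _ n ih =>
  cases w with
  | nil => simp [wordSubst_nil, wordConv_nil]
  | cons x w =>
    have hd : wordDeriv x (wordSubst F G) = wordConv G (wordSubst (wordDeriv x F) G) := by
      funext u
      exact wordSubst_cons F G x u
    rw [wordConv_cons, hd, wordSubst_cons, wordSubst_cons, wordDeriv_wordConv, wordSubst_nil,
      wordConv_assoc, ← wordConv_smul_right, ← wordConv_add_right]
    refine wordConv_congr (fun _ _ => rfl) fun u hu => ?_
    rw [wordSubst_linear, ih u.length (by simp at h; omega) _ _ u rfl]

lemma wordSubst_wordSubst (F G H : List A → ℂ) (w : List A) :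
    wordSubst (wordSubst F G) H w = wordSubst F (wordConv H (wordSubst G H)) w := by
  induction h : w.length using Nat.strong_induction_on generalizing w F with
  | _ n ih =>
  cases w with
  | nil => simp [wordSubst_nil]
  | cons x w =>
    have hd : wordDeriv x (wordSubst F G) = wordConv G (wordSubst (wordDeriv x F) G) := by
      funext u
      exact wordSubst_cons F G x u
    rw [wordSubst_cons, hd, wordSubst_cons, wordConv_assoc]
    refine wordConv_congr (fun _ _ => rfl) fun u hu => ?_
    rw [wordSubst_wordConv]
    refine wordConv_congr (fun _ _ => rfl) fun v hv => ?_
    exact ih v.length (by simp at h; omega) _ v rfl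

lemma wordSubst_unit_right (F : List A → ℂ) (w : List A) : wordSubst F wordUnit w = F w := by
  induction w generalizing F with
  | nil => simp [wordSubst_nil]
  | cons x w ih => rw [wordSubst_cons, wordConv_unit_left, ih]; rfl

/-- Splitting the concatenation product `G * (F ∘ G)` at the end of its first factor. -/
lemma wordConv_wordSubst_self (F G : List A → ℂ) (w : List A) :
    wordConv G (wordSubst F G) w = F [] * G w +
      ∑ i : Fin w.length, G (w.take i) *
        wordConv G (wordSubst (wordDeriv w[i] F) G) (w.drop (i + 1)) := by
  rw [wordConv, Finset.sum_range_succ, Finset.sum_range, add_comm]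
  congr 1
  · simp [wordSubst_nil, mul_comm]
  · refine Finset.sum_congr rfl fun i _ => ?_
    rw [List.drop_eq_getElem_cons i.2, wordSubst_cons]
    rfl

end Words

/-! ### Noncrossing partitions of integer intervals -/

section NoncrossingIntervals

/-- `P` is the set of blocks of a noncrossing partition of the interval `[s, e)`. -/
structure IsNCBlocks (s e : ℕ) (P : Finset (Finset ℕ)) : Prop where
  nonempty : ∀ V ∈ P, ∃ x, x ∈ V
  subset : ∀ V ∈ P, ∀ x ∈ V, s ≤ x ∧ x < e
  cover : ∀ x, s ≤ x → x < e → ∃ V ∈ P, x ∈ V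
  disjoint : ∀ V ∈ P, ∀ W ∈ P, ∀ x, x ∈ V → x ∈ W → V = W
  noncrossing : ∀ V ∈ P, ∀ W ∈ P, ∀ a ∈ V, ∀ b ∈ W, ∀ c ∈ V, ∀ d ∈ W,
    a < b → b < c → c < d → V = W

open Classical in
/-- The finite set of noncrossing partitions of `[s, e)`. -/
noncomputable def ncBlocks (s e : ℕ) : Finset (Finset (Finset ℕ)) :=
  (Finset.Ico s e).powerset.powerset.filter (IsNCBlocks s e)

lemma mem_ncBlocks {s e : ℕ} {P : Finset (Finset ℕ)} : P ∈ ncBlocks s e ↔ IsNCBlocks s e P := by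
  classical
  simp only [ncBlocks, Finset.mem_filter, Finset.mem_powerset, and_iff_right_iff_imp]
  intro h V hV
  simp only [Finset.mem_powerset]
  intro x hx
  simpa using h.subset V hV x hx

/-- The block of `x` in `P`, empty when no block contains `x`. -/
def blockOf (P : Finset (Finset ℕ)) (x : ℕ) : Finset ℕ := (P.filter (x ∈ ·)).sup id

namespace IsNCBlocks

variable {s e k : ℕ} {P Q : Finset (Finset ℕ)}

lemma blockOf_eq (h : IsNCBlocks s e P) {V : Finset ℕ} (hV : V ∈ P) {x : ℕ} (hx : x ∈ V) :
    blockOf P x = V := by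
  have : P.filter (x ∈ ·) = {V} := by
    ext W
    simp only [Finset.mem_filter, Finset.mem_singleton]
    constructor
    · rintro ⟨hW, hxW⟩
      exact h.disjoint W hW V hV x hxW hx
    · rintro rfl
      exact ⟨hV, hx⟩
  simp [blockOf, this]

lemma blockOf_cases (h : IsNCBlocks k e Q) (hk : k ≤ e) :
    (blockOf Q k ∈ Q ∧ k ∈ blockOf Q k) ∨ (blockOf Q k = ∅ ∧ k = e) := by
  rcases hk.lt_or_eq with hk | rfl
  · obtain ⟨V, hV, hx⟩ := h.cover k le_rfl hk
    rw [h.blockOf_eq hV hx]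
    exact .inl ⟨hV, hx⟩
  · refine .inr ⟨?_, rfl⟩
    have : Q = ∅ := by
      refine Finset.eq_empty_of_forall_notMem fun V hV => ?_
      obtain ⟨x, hx⟩ := h.nonempty V hV
      have := h.subset V hV x hx
      omega
    simp [blockOf, this]

end IsNCBlocks

/-- Glue a partition `P` of `[s + 1, k)` and a partition `Q` of `[k, e)` to a partition of
`[s, e)` by adding `s` to the block of `k`. -/
def glueBlocks (s k : ℕ) (P Q : Finset (Finset ℕ)) : Finset (Finset ℕ) :=
  insert (insert s (blockOf Q k)) (P ∪ Q.erase (blockOf Q k))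

lemma IsNCBlocks.glueBlocks {s k e : ℕ} {P Q : Finset (Finset ℕ)} (hs : s < k) (hk : k ≤ e)
    (hP : IsNCBlocks (s + 1) k P) (hQ : IsNCBlocks k e Q) :
    IsNCBlocks s e (glueBlocks s k P Q) := by
  have hB := hQ.blockOf_cases hk
  simp only [_root_.glueBlocks]
  generalize blockOf Q k = B at hB
  obtain ⟨p1, p2, p3, p4, -⟩ := id hP
  obtain ⟨q1, q2, q3, q4, -⟩ := id hQ
  have hBm : ∀ x ∈ B, k ≤ x ∧ x < e := by grind
  have hBd : ∀ V ∈ Q, ∀ x ∈ B, x ∈ V → B = V := by grind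
  constructor
  · grind
  · intro V hV x hx
    simp only [Finset.mem_insert, Finset.mem_union, Finset.mem_erase] at hV
    rcases hV with rfl | hV | hV <;> grind
  · intro x h1 h2
    rcases h1.eq_or_lt with rfl | h1
    · exact ⟨insert s B, by simp, by simp⟩
    · by_cases hx : x < k
      · obtain ⟨V, hV, hxV⟩ := p3 x h1 hx
        exact ⟨V, by simp [hV], hxV⟩
      · obtain ⟨V, hV, hxV⟩ := q3 x (by omega) h2
        by_cases hVB : V = B
        · exact ⟨insert s B, by simp, by simp [← hVB, hxV]⟩
        · exact ⟨V, by simp [hV, hVB], hxV⟩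
  · intro V hV W hW x hx hx'
    simp only [Finset.mem_insert, Finset.mem_union, Finset.mem_erase] at hV hW
    rcases hV with rfl | hV | hV <;> rcases hW with rfl | hW | hW <;> grind
  · intro V hV W hW a ha b hb c hc d hd h1 h2 h3
    simp only [Finset.mem_insert, Finset.mem_union, Finset.mem_erase] at hV hW
    rcases hV with rfl | hV | hV <;> rcases hW with rfl | hW | hW
    · rfl
    · grind
    · have hb' := q2 W hW.2 b hb
      have hc' : c ∈ B := by grind
      have hd' := q2 W hW.2 d hd
      have hkB : B ∈ Q ∧ k ∈ B := by grind
      rcases hb'.1.eq_or_lt with hkb | hkb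
      · exact absurd (hBd W hW.2 k hkB.2 (hkb ▸ hb)).symm hW.1
      · exact absurd (hQ.noncrossing B hkB.1 W hW.2 k hkB.2 b hb c hc' d hd hkb h2 h3).symm hW.1
    · grind
    · exact hP.noncrossing V hV W hW a ha b hb c hc d hd h1 h2 h3
    · grind
    · have hb' : b ∈ B := by grind
      have hd' : d ∈ B := by grind
      have hkB : B ∈ Q ∧ k ∈ B := by grind
      exact absurd (hQ.noncrossing V hV.2 B hkB.1 a ha b hb' c hc d hd' h1 h2 h3) hV.1
    · grind
    · exact hQ.noncrossing V hV.2 W hW.2 a ha b hb c hc d hd h1 h2 h3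

lemma exists_glueBlocks {s e : ℕ} {R : Finset (Finset ℕ)} (hs : s < e) (hR : IsNCBlocks s e R) :
    ∃ k P Q, s < k ∧ k ≤ e ∧ IsNCBlocks (s + 1) k P ∧ IsNCBlocks k e Q ∧
      glueBlocks s k P Q = R := by
  classical
  obtain ⟨V₀, hV₀, hsV⟩ := hR.cover s le_rfl hs
  obtain ⟨B, hB⟩ : ∃ B, B = V₀.erase s := ⟨_, rfl⟩
  have hBs : insert s B = V₀ := by grind
  obtain ⟨r1, r2, r3, r4, -⟩ := id hR
  obtain ⟨k, hk, hmin⟩ : ∃ k, (k ∈ B ∨ B = ∅ ∧ k = e) ∧ ∀ x ∈ B, k ≤ x := by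
    by_cases h : B.Nonempty
    · exact ⟨B.min' h, .inl (B.min'_mem h), fun x hx => B.min'_le x hx⟩
    · rw [Finset.not_nonempty_iff_eq_empty] at h
      exact ⟨e, .inr ⟨h, rfl⟩, by simp [h]⟩
  have hsk : s < k := by grind
  have hke : k ≤ e := by grind
  have key : ∀ V ∈ R, V ≠ V₀ → (∀ x ∈ V, x < k) ∨ ∀ x ∈ V, k ≤ x := by
    intro V hV hne
    by_contra! hcon
    obtain ⟨⟨x, hx, hkx⟩, y, hy, hyk⟩ := hcon
    have hkV : k ∈ V₀ := by grind
    have hys : s < y := by grind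
    have hxk : k < x := by grind
    exact hne (hR.noncrossing V₀ hV₀ V hV s hsV y hy k hkV x hx hys hyk hxk).symm
  obtain ⟨P, hP⟩ : ∃ P, P = R.filter fun V => V ≠ V₀ ∧ ∀ x ∈ V, x < k := ⟨_, rfl⟩
  obtain ⟨Q, hQ⟩ : ∃ Q, Q = (R.filter fun V => V ≠ V₀ ∧ ∀ x ∈ V, k ≤ x) ∪
    (if B = ∅ then ∅ else {B}) := ⟨_, rfl⟩
  have mP : ∀ V, V ∈ P ↔ V ∈ R ∧ V ≠ V₀ ∧ ∀ x ∈ V, x < k := by simp [hP]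
  have mQ : ∀ V, V ∈ Q ↔ (V ∈ R ∧ V ≠ V₀ ∧ ∀ x ∈ V, k ≤ x) ∨ (B ≠ ∅ ∧ V = B) := by
    intro V
    by_cases h : B = ∅
    · simp [hQ, h]
    · simp [hQ, h, or_comm]
  clear hP hQ
  have hPn : IsNCBlocks (s + 1) k P := by
    refine ⟨?_, ?_, ?_, ?_, ?_⟩
    · grind
    · grind
    · intro x h1 h2
      obtain ⟨V, hV, hx⟩ := r3 x (by omega) (by omega)
      refine ⟨V, ?_, hx⟩
      grind
    · grind
    · intro V hV W hW
      exact hR.noncrossing V ((mP V).1 hV).1 W ((mP W).1 hW).1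
  have hQn : IsNCBlocks k e Q := by
    refine ⟨?_, ?_, ?_, ?_, ?_⟩
    · intro V hV
      rcases (mQ V).1 hV with h | ⟨h, rfl⟩
      · exact r1 V h.1
      · exact Finset.nonempty_iff_ne_empty.2 h
    · grind
    · intro x h1 h2
      obtain ⟨V, hV, hx⟩ := r3 x (by omega) (by omega)
      by_cases h : V = V₀
      · exact ⟨B, by grind, by grind⟩
      · exact ⟨V, by grind, hx⟩
    · grind
    · intro V hV W hW a ha b hb c hc d hd h1 h2 h3
      rcases (mQ V).1 hV with hV | ⟨hV, rfl⟩ <;> rcases (mQ W).1 hW with hW | ⟨hW, rfl⟩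
      · exact hR.noncrossing V hV.1 W hW.1 a ha b hb c hc d hd h1 h2 h3
      · exact absurd (hR.noncrossing V hV.1 V₀ hV₀ a ha b (by grind) c hc d (by grind)
          h1 h2 h3) hV.2.1
      · exact absurd (hR.noncrossing V₀ hV₀ W hW.1 a (by grind) b hb c (by grind) d hd
          h1 h2 h3).symm hW.2.1
      · rfl
  refine ⟨k, P, Q, hsk, hke, hPn, hQn, ?_⟩
  have hBk : blockOf Q k = B := by
    rcases hk with hk | ⟨h1, h2⟩
    · exact hQn.blockOf_eq (by grind) hk
    · rcases hQn.blockOf_cases hke with h | h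
      · have := hQn.subset _ h.1 _ h.2
        omega
      · rw [h.1, h1]
  rw [glueBlocks, hBk, hBs]
  ext V
  simp only [Finset.mem_insert, Finset.mem_union, Finset.mem_erase]
  constructor
  · grind
  · intro hV
    by_cases h : V = V₀
    · exact .inl h
    · right
      rcases key V hV h with h' | h'
      · left; grind
      · right
        refine ⟨?_, by grind⟩
        rintro rfl
        obtain ⟨x, hx⟩ := r1 _ hV
        have := r4 _ hV V₀ hV₀ x hx (by grind)
        grind

lemma glueBlocks_inj {s e k k' : ℕ} {P Q P' Q' : Finset (Finset ℕ)}
    (hs : s < k) (hk : k ≤ e) (hs' : s < k') (hk' : k' ≤ e)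
    (hP : IsNCBlocks (s + 1) k P) (hQ : IsNCBlocks k e Q)
    (hP' : IsNCBlocks (s + 1) k' P') (hQ' : IsNCBlocks k' e Q')
    (h : glueBlocks s k P Q = glueBlocks s k' P' Q') : k = k' ∧ P = P' ∧ Q = Q' := by
  have hn := hP.glueBlocks hs hk hQ
  have hb : insert s (blockOf Q k) = insert s (blockOf Q' k') := by
    refine hn.disjoint _ (by simp [glueBlocks]) _ (by rw [h]; simp [glueBlocks]) s ?_ ?_ <;> simp
  have hB := hQ.blockOf_cases hk
  have hB' := hQ'.blockOf_cases hk'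
  rw [glueBlocks, glueBlocks] at h
  generalize blockOf Q k = B at *
  generalize blockOf Q' k' = B' at *
  have hBm : ∀ x ∈ B, k ≤ x ∧ x < e := by
    have := hQ.subset
    grind
  have hBm' : ∀ x ∈ B', k' ≤ x ∧ x < e := by
    have := hQ'.subset
    grind
  have hBB : B = B' := by
    ext x
    have := Finset.ext_iff.1 hb x
    grind
  subst hBB
  have hkk : k = k' := by grind
  subst hkk
  have hmem : ∀ V, (V = insert s B ∨ V ∈ P ∨ V ≠ B ∧ V ∈ Q) ↔
      (V = insert s B ∨ V ∈ P' ∨ V ≠ B ∧ V ∈ Q') := by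
    intro V
    simpa using Finset.ext_iff.1 h V
  have sP : ∀ V ∈ P, (∃ x, x ∈ V) ∧ ∀ x ∈ V, s < x ∧ x < k := fun V hV =>
    ⟨hP.nonempty V hV, fun x hx => hP.subset V hV x hx⟩
  have sP' : ∀ V ∈ P', (∃ x, x ∈ V) ∧ ∀ x ∈ V, s < x ∧ x < k := fun V hV =>
    ⟨hP'.nonempty V hV, fun x hx => hP'.subset V hV x hx⟩
  have sQ : ∀ V ∈ Q, (∃ x, x ∈ V) ∧ ∀ x ∈ V, k ≤ x ∧ x < e := fun V hV =>
    ⟨hQ.nonempty V hV, fun x hx => hQ.subset V hV x hx⟩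
  have sQ' : ∀ V ∈ Q', (∃ x, x ∈ V) ∧ ∀ x ∈ V, k ≤ x ∧ x < e := fun V hV =>
    ⟨hQ'.nonempty V hV, fun x hx => hQ'.subset V hV x hx⟩
  have hsB : s ∈ insert s B := by simp
  refine ⟨rfl, ?_, ?_⟩
  · ext V
    have := hmem V
    grind
  · ext V
    have := hmem V
    by_cases hVB : V = B
    · grind
    · grind

variable {A : Type*}

/-- The letters of `a` at the positions in `V`, in increasing order. -/
noncomputable def blockWord (a : ℕ → A) (V : Finset ℕ) : List A := (V.sort (· ≤ ·)).map a

lemma blockWord_insert (a : ℕ → A) {s : ℕ} {B : Finset ℕ} (h : ∀ x ∈ B, s < x) :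
    blockWord a (insert s B) = a s :: blockWord a B := by
  rw [blockWord, Finset.sort_insert (h₁ := fun b hb => (h b hb).le)
    (h₂ := fun hs => (h s hs).false)]
  rfl

/-- The sum over noncrossing partitions of `[s, e)` where the block of `s` is weighted by `F`
and all others by `r`. -/
noncomputable def pointedNCSum (F r : List A → ℂ) (a : ℕ → A) (s e : ℕ) : ℂ :=
  ∑ P ∈ ncBlocks s e, F (blockWord a (blockOf P s)) *
    ∏ V ∈ P.erase (blockOf P s), r (blockWord a V)

/-- The sum over noncrossing partitions of `[s, e)` with all blocks weighted by `r`. -/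
noncomputable def ncSum (r : List A → ℂ) (a : ℕ → A) (s e : ℕ) : ℂ :=
  ∑ P ∈ ncBlocks s e, ∏ V ∈ P, r (blockWord a V)

lemma ncBlocks_self (s : ℕ) : ncBlocks s s = {∅} := by
  ext P
  rw [mem_ncBlocks, Finset.mem_singleton]
  constructor
  · intro h
    refine Finset.eq_empty_of_forall_notMem fun V hV => ?_
    obtain ⟨x, hx⟩ := h.nonempty V hV
    have := h.subset V hV x hx
    omega
  · rintro rfl
    exact ⟨by simp, by simp, fun x h1 h2 => by omega, by simp, by simp⟩

lemma ncSum_self (r : List A → ℂ) (a : ℕ → A) (s : ℕ) : ncSum r a s s = 1 := by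
  simp [ncSum, ncBlocks_self]

lemma pointedNCSum_self (F r : List A → ℂ) (a : ℕ → A) (s : ℕ) :
    pointedNCSum F r a s s = F [] := by
  simp [pointedNCSum, ncBlocks_self, blockOf, blockWord]

lemma pointedNCSum_eq_ncSum (r : List A → ℂ) (a : ℕ → A) {s e : ℕ} (h : s < e) :
    pointedNCSum r r a s e = ncSum r a s e := by
  refine Finset.sum_congr rfl fun P hP => ?_
  rw [mem_ncBlocks] at hP
  rcases hP.blockOf_cases h.le with h' | h'
  · exact Finset.mul_prod_erase P (fun V => r (blockWord a V)) h'.1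
  · omega

lemma glueBlocks_weight (F r : List A → ℂ) (a : ℕ → A) {s k e : ℕ} {P Q : Finset (Finset ℕ)}
    (hs : s < k) (hk : k ≤ e) (hP : IsNCBlocks (s + 1) k P) (hQ : IsNCBlocks k e Q) :
    F (blockWord a (blockOf (glueBlocks s k P Q) s)) *
        ∏ V ∈ (glueBlocks s k P Q).erase (blockOf (glueBlocks s k P Q) s), r (blockWord a V) =
      (∏ V ∈ P, r (blockWord a V)) * (wordDeriv (a s) F (blockWord a (blockOf Q k)) *
        ∏ V ∈ Q.erase (blockOf Q k), r (blockWord a V)) := by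
  have hn := hP.glueBlocks hs hk hQ
  rw [hn.blockOf_eq (V := insert s (blockOf Q k)) (by simp [glueBlocks]) (by simp)]
  have hB : ∀ x ∈ blockOf Q k, s < x := by
    have := hQ.subset
    have := hQ.blockOf_cases hk
    grind
  have hne : insert s (blockOf Q k) ∉ P ∪ Q.erase (blockOf Q k) := by
    intro h
    have h1 := hP.subset
    have h2 := hQ.subset
    have : s ∈ insert s (blockOf Q k) := by simp
    simp only [Finset.mem_union, Finset.mem_erase] at h
    rcases h with h | h
    · have := h1 _ h _ this
      omega
    · have := h2 _ h.2 _ this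
      omega
  have hd : Disjoint P (Q.erase (blockOf Q k)) := by
    rw [Finset.disjoint_left]
    intro V hV hV'
    obtain ⟨x, hx⟩ := hP.nonempty V hV
    have := hP.subset V hV x hx
    have := hQ.subset V (Finset.mem_of_mem_erase hV') x hx
    omega
  rw [glueBlocks, Finset.erase_insert hne, Finset.prod_union hd, blockWord_insert a hB, wordDeriv]
  ring

lemma pointedNCSum_rec (F r : List A → ℂ) (a : ℕ → A) {s e : ℕ} (h : s < e) :
    pointedNCSum F r a s e = ∑ k ∈ Finset.Ioc s e,
      ncSum r a (s + 1) k * pointedNCSum (wordDeriv (a s) F) r a k e := by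
  simp only [pointedNCSum, ncSum, Finset.sum_mul_sum, ← Finset.sum_product']
  rw [Finset.sum_sigma']
  symm
  refine Finset.sum_bij (fun p _ => glueBlocks s p.1 p.2.1 p.2.2) ?_ ?_ ?_ ?_
  · rintro ⟨k, P, Q⟩ hp
    simp only [Finset.mem_sigma, Finset.mem_Ioc, Finset.mem_product, mem_ncBlocks] at hp ⊢
    exact hp.2.1.glueBlocks hp.1.1 hp.1.2 hp.2.2
  · rintro ⟨k, P, Q⟩ hp ⟨k', P', Q'⟩ hp' heq
    simp only [Finset.mem_sigma, Finset.mem_Ioc, Finset.mem_product, mem_ncBlocks] at hp hp'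
    obtain ⟨rfl, rfl, rfl⟩ := glueBlocks_inj hp.1.1 hp.1.2 hp'.1.1 hp'.1.2 hp.2.1 hp.2.2
      hp'.2.1 hp'.2.2 heq
    rfl
  · intro R hR
    obtain ⟨k, P, Q, h1, h2, h3, h4, h5⟩ := exists_glueBlocks h (mem_ncBlocks.1 hR)
    refine ⟨⟨k, P, Q⟩, ?_, h5⟩
    simp only [Finset.mem_sigma, Finset.mem_Ioc, Finset.mem_product, mem_ncBlocks]
    exact ⟨⟨h1, h2⟩, h3, h4⟩
  · rintro ⟨k, P, Q⟩ hp
    simp only [Finset.mem_sigma, Finset.mem_Ioc, Finset.mem_product, mem_ncBlocks] at hp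
    exact (glueBlocks_weight F r a hp.1.1 hp.1.2 hp.2.1 hp.2.2).symm

/-- The word `a_s a_{s+1} ⋯` of length `n`. -/
def segWord (a : ℕ → A) (s n : ℕ) : List A := (List.range' s n).map a

lemma pointedNCSum_eq_wordSubst (M r : List A → ℂ) (a : ℕ → A)
    (hM : ∀ s n, ncSum r a s (s + n) = M (segWord a s n)) (F : List A → ℂ) (s n : ℕ) :
    pointedNCSum F r a s (s + n) = wordSubst F M (segWord a s n) := by
  induction n using Nat.strong_induction_on generalizing F s with
  | _ n ih =>
  cases n with
  | zero => simp [pointedNCSum_self, segWord, wordSubst_nil]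
  | succ n =>
    rw [pointedNCSum_rec F r a (by omega)]
    have hw : segWord a s (n + 1) = a s :: segWord a (s + 1) n := by
      simp [segWord, List.range'_succ]
    have hl : (segWord a (s + 1) n).length = n := by simp [segWord]
    rw [hw, wordSubst_cons, wordConv, hl]
    refine Finset.sum_bij' (fun k _ => k - (s + 1)) (fun i _ => s + 1 + i) ?_ ?_ ?_ ?_ ?_
    · grind
    · grind
    · grind
    · grind
    · intro k hk
      rw [Finset.mem_Ioc] at hk
      obtain ⟨i, rfl⟩ := Nat.exists_eq_add_of_le (show s + 1 ≤ k by omega)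
      have h1 : (segWord a (s + 1) n).take i = segWord a (s + 1) i := by
        simp only [segWord, ← List.map_take]
        rw [List.take_range'_of_length_ge (by omega)]
      have h2 : (segWord a (s + 1) n).drop i = segWord a (s + 1 + i) (n - i) := by
        simp only [segWord, ← List.map_drop, List.drop_range', mul_one]
      rw [hM, Nat.add_sub_cancel_left, h1, h2, ← ih (n - i) (by omega)]
      congr 2
      omega

end NoncrossingIntervals

/-! ### The free moment-cumulant relation as a fixed point equation -/

section FreeRelation

variable {A : Type*}

/-- The blocks of a partition of `Fin m`, shifted by `s`. -/
def shiftedBlocks {m : ℕ} (s : ℕ) (π : NPart m) : Finset (Finset ℕ) :=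
  π.parts.map (Finset.mapEmbedding (Fin.valEmbedding.trans (addLeftEmbedding s))).toEmbedding

lemma mem_shiftedBlocks {m s : ℕ} {π : NPart m} {V : Finset ℕ} :
    V ∈ shiftedBlocks s π ↔
      ∃ W ∈ π.parts, W.map (Fin.valEmbedding.trans (addLeftEmbedding s)) = V := by
  simp [shiftedBlocks, Finset.mapEmbedding_apply]

lemma shiftedBlocks_isNCBlocks {m s : ℕ} {π : NPart m} (h : IsNoncrossing π) :
    IsNCBlocks s (s + m) (shiftedBlocks s π) := by
  refine ⟨?_, ?_, ?_, ?_, ?_⟩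
  · intro V hV
    obtain ⟨W, hW, rfl⟩ := mem_shiftedBlocks.1 hV
    obtain ⟨x, hx⟩ := π.nonempty_of_mem_parts hW
    exact ⟨_, Finset.mem_map_of_mem _ hx⟩
  · intro V hV x hx
    obtain ⟨W, hW, rfl⟩ := mem_shiftedBlocks.1 hV
    obtain ⟨i, hi, rfl⟩ := Finset.mem_map.1 hx
    simp
  · intro x h1 h2
    obtain ⟨W, hW, hx⟩ := π.exists_mem (Finset.mem_univ (⟨x - s, by omega⟩ : Fin m))
    refine ⟨_, mem_shiftedBlocks.2 ⟨W, hW, rfl⟩, Finset.mem_map.2 ⟨_, hx, ?_⟩⟩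
    simp [h1]
  · intro V hV V' hV' x hx hx'
    obtain ⟨W, hW, rfl⟩ := mem_shiftedBlocks.1 hV
    obtain ⟨W', hW', rfl⟩ := mem_shiftedBlocks.1 hV'
    obtain ⟨i, hi, rfl⟩ := Finset.mem_map.1 hx
    rw [Finset.mem_map'] at hx'
    rw [π.eq_of_mem_parts hW hW' hi hx']
  · intro V hV V' hV' a ha b hb c hc d hd h1 h2 h3
    obtain ⟨W, hW, rfl⟩ := mem_shiftedBlocks.1 hV
    obtain ⟨W', hW', rfl⟩ := mem_shiftedBlocks.1 hV'
    obtain ⟨a, ha', rfl⟩ := Finset.mem_map.1 ha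
    obtain ⟨b, hb', rfl⟩ := Finset.mem_map.1 hb
    obtain ⟨c, hc', rfl⟩ := Finset.mem_map.1 hc
    obtain ⟨d, hd', rfl⟩ := Finset.mem_map.1 hd
    rw [h a b c d (by simpa using h1) (by simpa using h2) (by simpa using h3) W hW W' hW' ha' hc'
      hb' hd']

lemma exists_shiftedBlocks {m s : ℕ} {P : Finset (Finset ℕ)} (h : IsNCBlocks s (s + m) P) :
    ∃ π : NPart m, IsNoncrossing π ∧ shiftedBlocks s π = P := by
  classical
  let g : Finset ℕ → Finset (Fin m) := fun V => Finset.univ.filter fun i => s + i.val ∈ V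
  have mg : ∀ V i, i ∈ g V ↔ s + i.val ∈ V := fun V i => by simp [g]
  have hg : ∀ V ∈ P, (g V).map (Fin.valEmbedding.trans (addLeftEmbedding s)) = V := by
    intro V hV
    ext x
    simp only [Finset.mem_map, mg]
    constructor
    · rintro ⟨i, hi, rfl⟩
      exact hi
    · intro hx
      have := h.subset V hV x hx
      refine ⟨⟨x - s, by omega⟩, ?_, ?_⟩ <;> simp [this.1, hx]
  let π : NPart m := Finpartition.ofExistsUnique (P.image g) (fun _ _ => Finset.subset_univ _)
    (by
      intro i _
      obtain ⟨V, hV, hi⟩ := h.cover (s + i.val) (by omega) (by omega)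
      refine ⟨g V, ⟨Finset.mem_image_of_mem _ hV, (mg _ _).2 hi⟩, ?_⟩
      rintro W ⟨hW, hiW⟩
      obtain ⟨V', hV', rfl⟩ := Finset.mem_image.1 hW
      rw [h.disjoint V' hV' V hV _ ((mg _ _).1 hiW) hi])
    (by
      intro hc
      obtain ⟨V, hV, hV0⟩ := Finset.mem_image.1 hc
      obtain ⟨x, hx⟩ := h.nonempty V hV
      rw [← hg V hV, hV0] at hx
      simp at hx)
  have hparts : π.parts = P.image g := rfl
  refine ⟨π, ?_, ?_⟩
  · intro a b c d h1 h2 h3 V hV W hW ha hc hb hd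
    rw [hparts] at hV hW
    obtain ⟨V, hV', rfl⟩ := Finset.mem_image.1 hV
    obtain ⟨W, hW', rfl⟩ := Finset.mem_image.1 hW
    rw [mg] at ha hb hc hd
    rw [h.noncrossing V hV' W hW' _ ha _ hb _ hc _ hd (by omega) (by omega) (by omega)]
  · ext V
    rw [mem_shiftedBlocks, hparts]
    constructor
    · rintro ⟨W, hW, rfl⟩
      obtain ⟨V, hV, rfl⟩ := Finset.mem_image.1 hW
      rwa [hg V hV]
    · intro hV
      exact ⟨g V, Finset.mem_image_of_mem _ hV, hg V hV⟩

lemma blockWord_map_shift (a : ℕ → A) (s : ℕ) {m : ℕ} (V : Finset (Fin m)) :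
    blockWord a (V.map (Fin.valEmbedding.trans (addLeftEmbedding s))) =
      (V.sort (· ≤ ·)).map fun i : Fin m => a (s + i) := by
  rw [blockWord, ← Finset.map_sort (r := (· ≤ ·)) (r' := (· ≤ ·)), List.map_map]
  · rfl
  · intro x _ y _
    simp

lemma ncSum_eq_finsum (r : List A → ℂ) (a : ℕ → A) (s m : ℕ) :
    ncSum r a s (s + m) =
      ∑ᶠ π ∈ {π : NPart m | IsNoncrossing π}, blockApply r (fun i => a (s + i)) π := by
  classical
  have hset : {π : NPart m | IsNoncrossing π} =
      ((Finset.univ.filter fun π : NPart m => IsNoncrossing π : Finset (NPart m)) :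
        Set (NPart m)) := by
    ext
    simp
  rw [hset, finsum_mem_coe_finset, ncSum]
  symm
  refine Finset.sum_bij (fun π _ => shiftedBlocks s π) ?_ ?_ ?_ ?_
  · intro π hπ
    exact mem_ncBlocks.2 (shiftedBlocks_isNCBlocks (Finset.mem_filter.1 hπ).2)
  · intro π _ π' _ h
    exact Finpartition.ext (Finset.map_injective _ h)
  · intro P hP
    obtain ⟨π, h1, h2⟩ := exists_shiftedBlocks (mem_ncBlocks.1 hP)
    exact ⟨π, by simpa using h1, h2⟩
  · intro π _
    rw [blockApply, shiftedBlocks, Finset.prod_map]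
    refine Finset.prod_congr rfl fun V _ => ?_
    rw [← blockWord_map_shift]
    rfl

/-- The free cumulant functional, normalized to `1` on the empty word. -/
def unitalCumulant (r : List A → ℂ) : List A → ℂ
  | [] => 1
  | x :: w => r (x :: w)

lemma FreeMC.wordSubst_eq [Ring A] {φ : A → ℂ} (hφ : φ 1 = 1) {r : List A → ℂ}
    (h : FreeMC φ r) (w : List A) :
    wordSubst (unitalCumulant r) (fun u => φ u.prod) w = φ w.prod := by
  have hM (a : ℕ → A) (s n : ℕ) : ncSum r a s (s + n) = φ (segWord a s n).prod := by
    rcases Nat.eq_zero_or_pos n with rfl | hn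
    · simp [ncSum_self, segWord, hφ]
    · rw [ncSum_eq_finsum, ← h n hn]
      congr 2
      rw [segWord, List.range'_eq_map_range, List.map_map, List.ofFn_eq_map,
        ← List.map_coe_finRange_eq_range, List.map_map]
      rfl
  obtain ⟨a, n, rfl⟩ : ∃ a n, w = segWord a 0 n := by
    refine ⟨fun i => w.getD i 0, w.length, ?_⟩
    refine List.ext_getElem (by simp [segWord]) fun i h1 h2 => ?_
    simp [segWord, h1]
  rw [← pointedNCSum_eq_wordSubst (fun u => φ u.prod) r a (hM a)]
  rcases Nat.eq_zero_or_pos n with rfl | hn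
  · simp [pointedNCSum_self, segWord, hφ, unitalCumulant]
  · rw [← hM, ← pointedNCSum_eq_ncSum r a (by omega)]
    refine Finset.sum_congr rfl fun P hP => ?_
    congr 1
    rw [mem_ncBlocks] at hP
    rcases hP.blockOf_cases (by omega) with h' | h'
    · have : blockWord a (blockOf P 0) ≠ [] := by
        intro h0
        have := congrArg List.length h0
        simp only [blockWord, List.length_map, Finset.length_sort, List.length_nil,
          Finset.card_eq_zero] at this
        rw [this] at h'
        simp at h'
      cases h0 : blockWord a (blockOf P 0) with
      | nil => exact absurd h0 this
      | cons => rfl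
    · omega

/-- If `S * (M ∘ S)` is the unit then the free cumulants are `M ∘ S`. -/
lemma FreeMC.unitalCumulant_eq [Ring A] {φ : A → ℂ} (hφ : φ 1 = 1) {r : List A → ℂ}
    (h : FreeMC φ r) {S : List A → ℂ}
    (hS : ∀ w, wordConv S (wordSubst (fun u => φ u.prod) S) w = wordUnit w) (w : List A) :
    unitalCumulant r w = wordSubst (fun u => φ u.prod) S w := by
  have h1 : wordSubst (unitalCumulant r) (fun u => φ u.prod) = fun u => φ u.prod :=
    funext (h.wordSubst_eq hφ)
  have h2 := wordSubst_wordSubst (unitalCumulant r) (fun u => φ u.prod) S w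
  rw [h1, funext hS, wordSubst_unit_right] at h2
  exact h2.symm

end FreeRelation

/-! ### Vertices, leaves and sectors of planar trees -/

namespace PTree

/-- Induction on a tree by splitting off the leftmost child of the root. -/
theorem cons_induction {C : PTree → Prop} (hleaf : C leaf)
    (hcons : ∀ c cs, C c → C (node cs) → C (node (c :: cs))) : ∀ t, C t
  | node [] => hleaf
  | node (c :: cs) =>
    hcons c cs (cons_induction hleaf hcons c) (cons_induction hleaf hcons (node cs))
termination_by t => sizeOf t

/-- Move a non-root vertex one child to the right. -/
def shiftPath : List ℕ → List ℕ
  | [] => []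
  | i :: p => (i + 1) :: p

lemma shiftPath_injective : Function.Injective shiftPath := by
  rintro (_ | ⟨i, p⟩) (_ | ⟨j, q⟩) h <;> simp_all [shiftPath]

lemma cons_zero_ne_shiftPath (p q : List ℕ) : 0 :: p ≠ shiftPath q := by
  cases q <;> simp [shiftPath]

variable {c : PTree} {cs : List PTree} {p q : List ℕ} {i k : ℕ}

@[simp] lemma subtreeAt_nil (t : PTree) : subtreeAt [] t = some t := by
  cases t; simp [subtreeAt]

@[simp] lemma subtreeAt_leaf_cons : subtreeAt (i :: p) leaf = none := by simp [subtreeAt]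

@[simp] lemma subtreeAt_zero : subtreeAt (0 :: p) (node (c :: cs)) = subtreeAt p c := by
  simp [subtreeAt]

@[simp] lemma subtreeAt_succ :
    subtreeAt ((i + 1) :: p) (node (c :: cs)) = subtreeAt (i :: p) (node cs) := by
  simp [subtreeAt]

@[simp] lemma not_isLeafAt_cons_nil : ¬ IsLeafAt (node (c :: cs)) [] := by simp [IsLeafAt]

@[simp] lemma isLeafAt_zero : IsLeafAt (node (c :: cs)) (0 :: p) ↔ IsLeafAt c p := by
  simp [IsLeafAt]

@[simp] lemma isLeafAt_succ :
    IsLeafAt (node (c :: cs)) ((i + 1) :: p) ↔ IsLeafAt (node cs) (i :: p) := by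
  simp [IsLeafAt]

@[simp] lemma isLeafAt_leaf : IsLeafAt leaf p ↔ p = [] := by
  cases p <;> simp [IsLeafAt]

@[simp] lemma isInternalAt_cons_nil : IsInternalAt (node (c :: cs)) [] := by
  simp [IsInternalAt]

@[simp] lemma isInternalAt_zero :
    IsInternalAt (node (c :: cs)) (0 :: p) ↔ IsInternalAt c p := by
  simp [IsInternalAt]

@[simp] lemma isInternalAt_succ :
    IsInternalAt (node (c :: cs)) ((i + 1) :: p) ↔ IsInternalAt (node cs) (i :: p) := by
  simp [IsInternalAt]

@[simp] lemma not_isInternalAt_leaf : ¬ IsInternalAt leaf p := by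
  cases p <;> simp [IsInternalAt]

lemma setOf_isLeafAt_singleton :
    {p | IsLeafAt (node [c]) p} = List.cons 0 '' {p | IsLeafAt c p} := by
  ext p
  rcases p with _ | ⟨_ | i, p⟩ <;> simp

lemma setOf_isLeafAt_cons (hcs : cs ≠ []) :
    {p | IsLeafAt (node (c :: cs)) p} =
      List.cons 0 '' {p | IsLeafAt c p} ∪ shiftPath '' {p | IsLeafAt (node cs) p} := by
  obtain ⟨d, ds, rfl⟩ := List.exists_cons_of_ne_nil hcs
  ext p
  simp only [Set.mem_ofPred_eq, Set.mem_union, Set.mem_image]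
  constructor
  · rcases p with _ | ⟨_ | i, p⟩ <;> intro h
    · simp at h
    · exact .inl ⟨p, by simpa using h, rfl⟩
    · exact .inr ⟨i :: p, by simpa using h, rfl⟩
  · rintro (⟨p, hp, rfl⟩ | ⟨_ | ⟨i, p⟩, hp, rfl⟩)
    · simpa using hp
    · simp at hp
    · simpa [shiftPath] using hp

lemma setOf_isInternalAt_cons :
    {p | IsInternalAt (node (c :: cs)) p} = insert []
      (List.cons 0 '' {p | IsInternalAt c p} ∪
        shiftPath '' ({p | IsInternalAt (node cs) p} \ {[]})) := by
  ext p
  simp only [Set.mem_insert_iff, Set.mem_ofPred_eq, Set.mem_union, Set.mem_image, Set.mem_sdiff,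
    Set.mem_singleton_iff]
  constructor
  · rcases p with _ | ⟨_ | i, p⟩ <;> intro h
    · simp
    · exact .inr (.inl ⟨p, by simpa using h, rfl⟩)
    · exact .inr (.inr ⟨i :: p, by simpa using h, rfl⟩)
  · rintro (rfl | ⟨p, hp, rfl⟩ | ⟨_ | ⟨i, p⟩, hp, rfl⟩)
    · simp
    · simpa using hp
    · simp at hp
    · simpa [shiftPath] using hp

lemma finite_isLeafAt (t : PTree) : {p | IsLeafAt t p}.Finite := by
  induction t using cons_induction with
  | hleaf => simp
  | hcons c cs hc hcs =>
    by_cases h : cs = []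
    · subst h
      rw [setOf_isLeafAt_singleton]
      exact hc.image _
    · rw [setOf_isLeafAt_cons h]
      exact (hc.image _).union (hcs.image _)

lemma finite_isInternalAt (t : PTree) : {p | IsInternalAt t p}.Finite := by
  induction t using cons_induction with
  | hleaf => simp
  | hcons c cs hc hcs =>
    rw [setOf_isInternalAt_cons]
    exact ((hc.image _).union ((hcs.subset Set.sdiff_subset).image _)).insert _

lemma numLeaves_eq_ncard (t : PTree) : numLeaves t = {p | IsLeafAt t p}.ncard :=
  Nat.card_coe_set_eq _

@[simp] lemma numLeaves_leaf : numLeaves leaf = 1 := by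
  simp [numLeaves_eq_ncard]

@[simp] lemma numLeaves_singleton : numLeaves (node [c]) = numLeaves c := by
  rw [numLeaves_eq_ncard, numLeaves_eq_ncard, setOf_isLeafAt_singleton,
    Set.ncard_image_of_injective _ (List.cons_injective)]

lemma disjoint_image_cons_shiftPath (X Y : Set (List ℕ)) :
    Disjoint (List.cons 0 '' X) (shiftPath '' Y) := by
  rw [Set.disjoint_left]
  rintro _ ⟨p, _, rfl⟩ ⟨q, _, h⟩
  exact cons_zero_ne_shiftPath p q h.symm

lemma numLeaves_cons (hcs : cs ≠ []) :
    numLeaves (node (c :: cs)) = numLeaves c + numLeaves (node cs) := by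
  rw [numLeaves_eq_ncard, numLeaves_eq_ncard, numLeaves_eq_ncard, setOf_isLeafAt_cons hcs,
    Set.ncard_union_eq (disjoint_image_cons_shiftPath _ _) ((finite_isLeafAt _).image _)
      ((finite_isLeafAt _).image _),
    Set.ncard_image_of_injective _ List.cons_injective,
    Set.ncard_image_of_injective _ shiftPath_injective]

lemma numLeaves_pos (t : PTree) : 0 < numLeaves t := by
  induction t using cons_induction with
  | hleaf => simp
  | hcons c cs hc hcs =>
    by_cases h : cs = []
    · subst h
      simpa using hc
    · rw [numLeaves_cons h]
      omega

lemma leavesBefore_eq_ncard (t : PTree) (p : List ℕ) :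
    leavesBefore t p = {q | IsLeafAt t q ∧ List.Lex (· < ·) q p ∧ ¬ p <+: q}.ncard :=
  Nat.card_coe_set_eq _

@[simp] lemma leavesBefore_nil (t : PTree) : leavesBefore t [] = 0 := by
  simp [leavesBefore_eq_ncard]

@[simp] lemma leavesBefore_zero : leavesBefore (node (c :: cs)) (0 :: p) = leavesBefore c p := by
  rw [leavesBefore_eq_ncard, leavesBefore_eq_ncard,
    ← Set.ncard_image_of_injective {q | IsLeafAt c q ∧ _} (List.cons_injective (a := 0))]
  congr 1
  ext q
  simp only [Set.mem_ofPred_eq, Set.mem_image]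
  rcases q with _ | ⟨_ | j, q⟩ <;> simp [List.cons_lt_cons_iff]

lemma leavesBefore_succ (hcs : cs ≠ []) :
    leavesBefore (node (c :: cs)) ((i + 1) :: p) =
      numLeaves c + leavesBefore (node cs) (i :: p) := by
  rw [leavesBefore_eq_ncard, leavesBefore_eq_ncard, numLeaves_eq_ncard,
    ← Set.ncard_image_of_injective {q | IsLeafAt c q} (List.cons_injective (a := 0)),
    ← Set.ncard_image_of_injective {q | IsLeafAt (node cs) q ∧ _} shiftPath_injective,
    ← Set.ncard_union_eq (disjoint_image_cons_shiftPath _ _) ((finite_isLeafAt _).image _)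
      (((finite_isLeafAt (node cs)).subset fun q hq => hq.1).image _)]
  congr 1
  obtain ⟨d, ds, rfl⟩ := List.exists_cons_of_ne_nil hcs
  ext q
  simp only [Set.mem_ofPred_eq, Set.mem_union, Set.mem_image]
  constructor
  · rcases q with _ | ⟨_ | j, q⟩ <;> intro h
    · simp at h
    · exact .inl ⟨q, by simpa using h.1, rfl⟩
    · exact .inr ⟨j :: q, by simpa [List.cons_lt_cons_iff] using h, rfl⟩
  · rintro (⟨q, hq, rfl⟩ | ⟨_ | ⟨j, q⟩, hq, rfl⟩)
    · simpa [List.cons_lt_cons_iff] using hq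
    · simp at hq
    · simpa [shiftPath, List.cons_lt_cons_iff] using hq

@[simp] lemma subtree!_nil (t : PTree) : subtree! t [] = t := by simp [subtree!]

@[simp] lemma subtree!_zero : subtree! (node (c :: cs)) (0 :: p) = subtree! c p := by
  simp [subtree!]

@[simp] lemma subtree!_succ :
    subtree! (node (c :: cs)) ((i + 1) :: p) = subtree! (node cs) (i :: p) := by
  simp [subtree!]

lemma sectorIn_nil {t : PTree} : SectorIn t [] k ↔ k + 2 ≤ numLeaves t := by
  simp [SectorIn]

lemma sectorIn_zero : SectorIn (node (c :: cs)) (0 :: p) k ↔ SectorIn c p k := by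
  simp [SectorIn]

lemma sectorIn_succ (hcs : cs ≠ []) :
    SectorIn (node (c :: cs)) ((i + 1) :: p) k ↔
      numLeaves c ≤ k ∧ SectorIn (node cs) (i :: p) (k - numLeaves c) := by
  simp only [SectorIn, leavesBefore_succ hcs, subtree!_succ]
  omega

lemma not_sectorIn_leaf_cons : ¬ SectorIn leaf (i :: p) k := by
  simp only [SectorIn, subtree!, subtreeAt_leaf_cons, Option.getD_none, numLeaves_leaf]
  omega

lemma SectorIn.le {t : PTree} (h : SectorIn t p k) : k + 2 ≤ numLeaves t := by
  induction t using cons_induction generalizing p k with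
  | hleaf =>
    cases p with
    | nil => exact sectorIn_nil.1 h
    | cons i p => exact absurd h not_sectorIn_leaf_cons
  | hcons c cs hc hcs =>
    rcases p with _ | ⟨_ | i, p⟩
    · exact sectorIn_nil.1 h
    · have := hc (sectorIn_zero.1 h)
      by_cases h0 : cs = []
      · subst h0
        simpa using this
      · rw [numLeaves_cons h0]
        omega
    · by_cases h0 : cs = []
      · subst h0
        simp only [SectorIn, subtree!, subtreeAt_succ, subtreeAt_leaf_cons, Option.getD_none,
          numLeaves_leaf] at h
        omega
      · rw [sectorIn_succ h0] at h
        have := hcs h.2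
        rw [numLeaves_cons h0]
        omega

lemma ownsSector_zero :
    OwnsSector (node (c :: cs)) (0 :: p) k ↔ OwnsSector c p k := by
  simp only [OwnsSector, isInternalAt_zero, sectorIn_zero]
  refine and_congr_right fun _ => and_congr_right fun _ => ⟨?_, ?_⟩
  · intro h w hw hp hne
    have := h (0 :: w) (by simpa using hw) (by simpa using hp) (by simpa using hne)
    rwa [sectorIn_zero] at this
  · rintro h (_ | ⟨j, w⟩) hw hp hne
    · simp at hp
    · rw [List.cons_prefix_cons] at hp
      obtain ⟨rfl, hp⟩ := hp
      rw [sectorIn_zero]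
      exact h w (by simpa using hw) hp (by simpa using hne)

lemma ownsSector_succ (hcs : cs ≠ []) :
    OwnsSector (node (c :: cs)) ((i + 1) :: p) k ↔
      numLeaves c ≤ k ∧ OwnsSector (node cs) (i :: p) (k - numLeaves c) := by
  by_cases hk : numLeaves c ≤ k
  swap
  · simp [OwnsSector, sectorIn_succ hcs, hk]
  simp only [OwnsSector, isInternalAt_succ, sectorIn_succ hcs, hk, true_and]
  refine and_congr_right fun _ => and_congr_right fun _ => ⟨?_, ?_⟩
  · rintro h (_ | ⟨j, w⟩) hw hp hne
    · simp at hp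
    · rw [List.cons_prefix_cons] at hp
      obtain ⟨rfl, hp⟩ := hp
      have := h ((i + 1) :: w) (by simpa using hw) (by simpa using hp) (by simpa using hne)
      rwa [sectorIn_succ hcs, and_iff_right hk] at this
  · rintro h (_ | ⟨j, w⟩) hw hp hne
    · simp at hp
    · rw [List.cons_prefix_cons] at hp
      obtain ⟨rfl, hp⟩ := hp
      rw [sectorIn_succ hcs, and_iff_right hk]
      exact h (i :: w) (by simpa using hw) (by simpa using hp) (by simpa using hne)

lemma ownsSector_nil {t : PTree} : OwnsSector t [] k ↔ IsInternalAt t [] ∧ k + 2 ≤ numLeaves t ∧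
    ∀ w, IsInternalAt t w → w ≠ [] → ¬ SectorIn t w k := by
  simp [OwnsSector, sectorIn_nil]

lemma OwnsSector.numLeaves_le (h : OwnsSector (node (c :: cs)) [] k) : numLeaves c ≤ k + 1 := by
  by_contra! hlt
  refine (ownsSector_nil.1 h).2.2 [0] ?_ (by simp) ?_
  · rcases c with ⟨_ | ⟨d, ds⟩⟩
    · simp at hlt
    · simp
  · rw [sectorIn_zero, sectorIn_nil]
    omega

lemma not_ownsSector_singleton_nil : ¬ OwnsSector (node [c]) [] k := by
  intro h
  have h1 := h.numLeaves_le
  have h2 := (ownsSector_nil.1 h).2.1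
  simp only [numLeaves_singleton] at h2
  omega

lemma ownsSector_cons_nil (hcs : cs ≠ []) :
    OwnsSector (node (c :: cs)) [] k ↔ k + 1 = numLeaves c ∨
      numLeaves c ≤ k ∧ OwnsSector (node cs) [] (k - numLeaves c) := by
  have hpos := numLeaves_pos (node cs)
  constructor
  · intro h
    by_cases hk : k + 1 = numLeaves c
    · exact .inl hk
    have hle := h.numLeaves_le
    have hk' : numLeaves c ≤ k := by omega
    rw [ownsSector_nil, numLeaves_cons hcs] at h
    refine .inr ⟨hk', ?_⟩
    rw [ownsSector_nil]
    refine ⟨?_, by omega, ?_⟩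
    · obtain ⟨d, ds, rfl⟩ := List.exists_cons_of_ne_nil hcs
      simp
    · rintro (_ | ⟨j, w⟩) hw hne
      · simp at hne
      · have := h.2.2 ((j + 1) :: w) (by simpa using hw) (by simp)
        rwa [sectorIn_succ hcs, and_iff_right hk'] at this
  · intro h
    rw [ownsSector_nil, numLeaves_cons hcs]
    refine ⟨by simp, ?_, ?_⟩
    · rcases h with h | h
      · omega
      · have := (ownsSector_nil.1 h.2).2.1
        omega
    · rintro (_ | ⟨_ | j, w⟩) hw hne hs
      · simp at hne
      · have := (sectorIn_zero.1 hs).le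
        omega
      · rw [sectorIn_succ hcs] at hs
        rcases h with h | h
        · omega
        · exact (ownsSector_nil.1 h.2).2.2 (j :: w) (by simpa using hw) (by simp) hs.2

variable {A : Type*} [Ring A]

open Classical in
/-- The letters of `w` in the sectors owned by the vertex `v` of `t`. -/
noncomputable def ownedWord (t : PTree) (v : List ℕ) (w : List A) : List A :=
  ((List.range w.length).filter fun i => OwnsSector t v i).map fun i => w.getD i 0

lemma map_filter_range_append (P : ℕ → Bool) (u : List A) (x : A) (v : List A) :
    ((List.range (u ++ x :: v).length).filter P).map (fun i => (u ++ x :: v).getD i 0) =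
      ((List.range u.length).filter P).map (fun i => u.getD i 0) ++
        ((if P u.length then [x] else []) ++
          ((List.range v.length).filter fun i => P (u.length + 1 + i)).map
            fun i => v.getD i 0) := by
  have hl : (u ++ x :: v).length = u.length + (1 + v.length) := by simp; omega
  rw [hl, List.range_add, List.range_add]
  simp only [List.filter_append, List.map_append, List.map_map, List.filter_map]
  congr 1
  · refine List.map_congr_left fun i hi => ?_
    have : i < u.length := by simpa using (List.mem_filter.1 hi).1
    rw [List.getD_append _ _ _ _ this]
  congr 1
  · by_cases h : P u.length <;> simp [h, List.range_succ]
  · have h1 : P ∘ (fun x => u.length + x) ∘ (fun x => 1 + x) =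
        fun i => P (u.length + 1 + i) := by
      funext i
      simp [add_assoc]
    rw [h1]
    refine List.map_congr_left fun i hi => ?_
    simp only [Function.comp]
    rw [List.getD_append_right _ _ _ _ (by omega), Nat.add_sub_cancel_left, add_comm 1 i,
      List.getD_cons_succ]

variable {u v w : List A} {x : A}

lemma ownedWord_singleton_nil : ownedWord (node [c]) [] w = [] := by
  simp [ownedWord, not_ownsSector_singleton_nil]

lemma ownedWord_singleton_zero : ownedWord (node [c]) (0 :: p) w = ownedWord c p w := by
  simp only [ownedWord]
  congr 1
  exact List.filter_congr fun i _ => decide_eq_decide.2 ownsSector_zero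

open Classical in
lemma ownedWord_append (t : PTree) (p : List ℕ) :
    ownedWord t p (u ++ x :: v) =
      ((List.range u.length).filter fun i => OwnsSector t p i).map (fun i => u.getD i 0) ++
        ((if OwnsSector t p u.length then [x] else []) ++
          ((List.range v.length).filter fun i => OwnsSector t p (u.length + 1 + i)).map
            fun i => v.getD i 0) := by
  simpa [ownedWord] using map_filter_range_append (fun i => decide (OwnsSector t p i)) u x v

open Classical in
lemma map_filter_eq_nil {P : ℕ → Prop} (h : ∀ i < u.length, ¬ P i) :
    ((List.range u.length).filter fun i => P i).map (fun i => u.getD i 0) = [] := by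
  simpa using h

lemma ownedWord_cons_nil (hcs : cs ≠ []) (hu : u.length + 1 = numLeaves c) :
    ownedWord (node (c :: cs)) [] (u ++ x :: v) = x :: ownedWord (node cs) [] v := by
  have h1 (i : ℕ) (hi : i < u.length) : ¬ OwnsSector (node (c :: cs)) [] i := by
    rw [ownsSector_cons_nil hcs]
    omega
  have h2 : OwnsSector (node (c :: cs)) [] u.length := (ownsSector_cons_nil hcs).2 (.inl hu)
  rw [ownedWord_append, map_filter_eq_nil h1, if_pos h2, ownedWord]
  simp only [List.nil_append, List.singleton_append, List.cons.injEq, true_and]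
  congr 1
  refine List.filter_congr fun i _ => decide_eq_decide.2 ?_
  rw [ownsSector_cons_nil hcs, ← hu, Nat.add_sub_cancel_left]
  exact ⟨fun h => h.elim (by omega) And.right, fun h => .inr ⟨by omega, h⟩⟩

lemma ownedWord_zero (hu : u.length + 1 = numLeaves c) :
    ownedWord (node (c :: cs)) (0 :: p) (u ++ x :: v) = ownedWord c p u := by
  have h1 (i : ℕ) (hi : u.length ≤ i) : ¬ OwnsSector (node (c :: cs)) (0 :: p) i := fun h => by
    have := (ownsSector_zero.1 h).2.1.le
    omega
  rw [ownedWord_append, if_neg (h1 _ le_rfl),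
    map_filter_eq_nil (u := v) fun i _ => h1 (u.length + 1 + i) (by omega),
    List.append_nil, List.append_nil, ownedWord]
  congr 1
  exact List.filter_congr fun i _ => decide_eq_decide.2 ownsSector_zero

lemma ownedWord_succ (hcs : cs ≠ []) (hu : u.length + 1 = numLeaves c) :
    ownedWord (node (c :: cs)) ((i + 1) :: p) (u ++ x :: v) = ownedWord (node cs) (i :: p) v := by
  have h1 (k : ℕ) (hk : k ≤ u.length) : ¬ OwnsSector (node (c :: cs)) ((i + 1) :: p) k := by
    rw [ownsSector_succ hcs]
    omega
  rw [ownedWord_append, if_neg (h1 _ le_rfl), map_filter_eq_nil fun k hk => h1 k hk.le,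
    List.nil_append, List.nil_append, ownedWord]
  congr 1
  refine List.filter_congr fun k _ => decide_eq_decide.2 ?_
  rw [ownsSector_succ hcs, ← hu, Nat.add_sub_cancel_left, and_iff_right (by omega)]

/-- The weight of a tree where the root carries `F` and the other internal vertices `G`. -/
noncomputable def treeWeight (F G : List A → ℂ) (t : PTree) (w : List A) : ℂ :=
  ∏ᶠ v ∈ {v : List ℕ | IsInternalAt t v}, (if v = [] then F else G) (ownedWord t v w)

@[simp] lemma treeWeight_leaf (F G : List A → ℂ) (w : List A) : treeWeight F G leaf w = 1 := by
  simp [treeWeight]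

lemma treeWeight_eq_root_mul (F G : List A → ℂ) (w : List A) :
    treeWeight F G (node (c :: cs)) w = F (ownedWord (node (c :: cs)) [] w) *
      ((∏ᶠ q ∈ {q | IsInternalAt c q}, G (ownedWord (node (c :: cs)) (0 :: q) w)) *
        ∏ᶠ q ∈ {q | IsInternalAt (node cs) q} \ {[]},
          G (ownedWord (node (c :: cs)) (shiftPath q) w)) := by
  have hfin : ({q | IsInternalAt (node cs) q} \ {[]}).Finite :=
    (finite_isInternalAt _).subset Set.sdiff_subset
  rw [treeWeight, setOf_isInternalAt_cons, finprod_mem_insert,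
    finprod_mem_union (disjoint_image_cons_shiftPath _ _) ((finite_isInternalAt _).image _)
      (hfin.image _),
    finprod_mem_image (List.cons_injective.injOn), finprod_mem_image shiftPath_injective.injOn]
  · congr 1
    congr 1
    refine finprod_mem_congr rfl fun q hq => ?_
    rcases q with _ | ⟨i, q⟩
    · simp at hq
    · simp [shiftPath]
  · rintro (⟨q, _, h⟩ | ⟨_ | ⟨i, q⟩, hq, h⟩)
    · simp at h
    · simp at hq
    · simp [shiftPath] at h
  · exact ((finite_isInternalAt _).image _).union (hfin.image _)

lemma treeWeight_same (G : List A → ℂ) (t : PTree) (w : List A) :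
    treeWeight G G t w = ∏ᶠ v ∈ {v | IsInternalAt t v}, G (ownedWord t v w) := by
  simp [treeWeight]

lemma treeWeight_singleton (F G : List A → ℂ) (w : List A) :
    treeWeight F G (node [c]) w = F [] * treeWeight G G c w := by
  rw [treeWeight_eq_root_mul, ownedWord_singleton_nil, treeWeight_same]
  simp [ownedWord_singleton_zero]

lemma treeWeight_cons (F G : List A → ℂ) (hcs : cs ≠ []) (hu : u.length + 1 = numLeaves c) :
    treeWeight F G (node (c :: cs)) (u ++ x :: v) =
      treeWeight G G c u * treeWeight (wordDeriv x F) G (node cs) v := by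
  have hroot : {q | IsInternalAt (node cs) q} =
      insert [] ({q | IsInternalAt (node cs) q} \ {[]}) := by
    obtain ⟨d, ds, rfl⟩ := List.exists_cons_of_ne_nil hcs
    rw [Set.insert_sdiff_singleton, Set.insert_eq_of_mem]
    simp
  have hnode : treeWeight (wordDeriv x F) G (node cs) v =
      F (x :: ownedWord (node cs) [] v) *
        ∏ᶠ q ∈ {q | IsInternalAt (node cs) q} \ {[]}, G (ownedWord (node cs) q v) := by
    rw [treeWeight, hroot, finprod_mem_insert _ (by simp)
      ((finite_isInternalAt _).subset Set.sdiff_subset), ← hroot]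
    refine congrArg₂ _ rfl (finprod_mem_congr rfl fun q hq => ?_)
    rw [if_neg (by simpa using hq.2)]
  rw [treeWeight_eq_root_mul, ownedWord_cons_nil hcs hu, treeWeight_same, hnode]
  have h2 : ∏ᶠ q ∈ {q | IsInternalAt (node cs) q} \ {[]},
      G (ownedWord (node (c :: cs)) (shiftPath q) (u ++ x :: v)) =
        ∏ᶠ q ∈ {q | IsInternalAt (node cs) q} \ {[]}, G (ownedWord (node cs) q v) := by
    refine finprod_mem_congr rfl fun q hq => ?_
    rcases q with _ | ⟨i, q⟩
    · simp at hq
    · rw [shiftPath, ownedWord_succ hcs hu]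
  rw [h2]
  simp only [ownedWord_zero hu]
  ring

end PTree

/-! ### Sums over Schröder trees -/

namespace PTree

/-- Nonempty lists of Schröder trees with `n + 1` leaves in total. -/
def forestSet (n : ℕ) : Set (List PTree) :=
  {cs | cs ≠ [] ∧ (∀ c ∈ cs, IsSchroder c) ∧ numLeaves (node cs) = n + 1}

/-- Lists of at least two Schröder trees with `n + 1` leaves in total. -/
def wideForestSet (n : ℕ) : Set (List PTree) := {cs | cs ∈ forestSet n ∧ 2 ≤ cs.length}

lemma isSchroder_node_iff {cs : List PTree} :
    IsSchroder (node cs) ↔ cs = [] ∨ 2 ≤ cs.length ∧ ∀ c ∈ cs, IsSchroder c := by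
  constructor
  · rintro (_ | ⟨_, h1, h2⟩)
    · exact .inl rfl
    · exact .inr ⟨h1, h2⟩
  · rintro (rfl | ⟨h1, h2⟩)
    · exact .leaf
    · exact .node _ h1 h2

lemma cons_mem_wideForestSet {n : ℕ} {c : PTree} {cs : List PTree} :
    c :: cs ∈ wideForestSet n ↔ ∃ i < n, c ∈ ST i ∧ cs ∈ forestSet (n - (i + 1)) := by
  have h1 := numLeaves_pos c
  have h2 := numLeaves_pos (node cs)
  by_cases h : cs = []
  · simp [wideForestSet, forestSet, h]
  have hl : 2 ≤ (c :: cs).length := by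
    have := List.length_pos_iff.2 h
    simp only [List.length_cons]
    omega
  simp only [wideForestSet, forestSet, ST, Set.mem_ofPred_eq, numLeaves_cons h, hl, and_true,
    List.forall_mem_cons, ne_eq, h, reduceCtorEq, not_false_eq_true, true_and]
  constructor
  · rintro ⟨⟨hc, hcs⟩, hn⟩
    exact ⟨numLeaves c - 1, by omega, ⟨hc, by omega⟩, hcs, by omega⟩
  · rintro ⟨i, hi, ⟨hc, hci⟩, hcs, hn⟩
    exact ⟨⟨hc, hcs⟩, by omega⟩

lemma forestSet_eq (n : ℕ) :
    forestSet n = (fun c => [c]) '' ST n ∪ wideForestSet n := by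
  ext cs
  rcases cs with _ | ⟨c, _ | ⟨d, ds⟩⟩ <;> simp [forestSet, wideForestSet, ST]

@[simp] lemma ST_zero : ST 0 = {leaf} := by
  ext ⟨cs⟩
  rcases cs with _ | ⟨c, cs⟩
  · simp [ST, IsSchroder.leaf]
  · have h1 := numLeaves_pos c
    have h2 := numLeaves_pos (node cs)
    simp only [ST, isSchroder_node_iff, Set.mem_ofPred_eq, Set.mem_singleton_iff, node.injEq,
      reduceCtorEq, false_or, iff_false]
    rintro ⟨⟨h, -⟩, h3⟩
    have : cs ≠ [] := by
      rintro rfl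
      simp at h
    rw [numLeaves_cons this] at h3
    omega

lemma ST_succ (n : ℕ) : ST (n + 1) = node '' wideForestSet (n + 1) := by
  ext ⟨cs⟩
  rcases cs with _ | ⟨c, cs⟩
  · simp [ST, wideForestSet]
  · simp [ST, wideForestSet, isSchroder_node_iff, forestSet]
    tauto

lemma finite_forestSet_and_finite_ST (n : ℕ) : (forestSet n).Finite ∧ (ST n).Finite := by
  induction n using Nat.strong_induction_on with
  | _ n ih =>
    have hw : (wideForestSet n).Finite := by
      refine (Set.Finite.biUnion (Set.finite_lt_nat n) (t := fun i =>
        Set.image2 List.cons (ST i) (forestSet (n - (i + 1)))) fun i hi =>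
          .image2 _ (ih i hi).2 (ih (n - (i + 1)) (by grind)).1).subset ?_
      rintro (_ | ⟨c, cs⟩) h
      · simp [wideForestSet] at h
      · obtain ⟨i, hi, hc, hcs⟩ := cons_mem_wideForestSet.1 h
        exact Set.mem_biUnion hi (Set.mem_image2_of_mem hc hcs)
    have hST : (ST n).Finite := by
      rcases n with _ | n
      · simp
      · rw [ST_succ]
        exact hw.image _
    exact ⟨by rw [forestSet_eq]; exact (hST.image _).union hw, hST⟩

/-- The finite set of Schröder trees with `n + 1` leaves. -/
noncomputable def trees (n : ℕ) : Finset PTree := (finite_forestSet_and_finite_ST n).2.toFinset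

/-- The finite set of nonempty lists of Schröder trees with `n + 1` leaves in total. -/
noncomputable def forests (n : ℕ) : Finset (List PTree) :=
  (finite_forestSet_and_finite_ST n).1.toFinset

lemma finite_wideForestSet (n : ℕ) : (wideForestSet n).Finite :=
  (finite_forestSet_and_finite_ST n).1.subset fun _ h => h.1

/-- The finite set of lists of at least two Schröder trees with `n + 1` leaves in total. -/
noncomputable def wideForests (n : ℕ) : Finset (List PTree) := (finite_wideForestSet n).toFinset

@[simp] lemma mem_trees {n : ℕ} {t : PTree} : t ∈ trees n ↔ t ∈ ST n := by simp [trees]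

@[simp] lemma mem_forests {n : ℕ} {cs : List PTree} : cs ∈ forests n ↔ cs ∈ forestSet n := by
  simp [forests]

@[simp] lemma mem_wideForests {n : ℕ} {cs : List PTree} :
    cs ∈ wideForests n ↔ cs ∈ wideForestSet n := by
  simp [wideForests]

lemma trees_zero : trees 0 = {leaf} := by
  ext t
  simp

lemma sum_trees_succ (n : ℕ) (f : PTree → ℂ) :
    ∑ t ∈ trees (n + 1), f t = ∑ cs ∈ wideForests (n + 1), f (node cs) := by
  refine (Finset.sum_nbij node (fun cs hcs => ?_) (fun _ _ _ _ h => node.inj h) ?_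
    fun _ _ => rfl).symm
  · rw [mem_trees, ST_succ]
    exact Set.mem_image_of_mem _ (mem_wideForests.1 hcs)
  · intro t ht
    rw [Finset.mem_coe, mem_trees, ST_succ] at ht
    simpa using ht

lemma sum_forests (n : ℕ) (f : List PTree → ℂ) :
    ∑ cs ∈ forests n, f cs = ∑ c ∈ trees n, f [c] + ∑ cs ∈ wideForests n, f cs := by
  classical
  have hf : forests n = (trees n).image (fun c => [c]) ∪ wideForests n := by
    ext cs
    rw [mem_forests, forestSet_eq]
    simp
  have hd : Disjoint ((trees n).image (fun c => [c])) (wideForests n) := by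
    rw [Finset.disjoint_left]
    intro cs hcs hw
    obtain ⟨c, -, rfl⟩ := Finset.mem_image.1 hcs
    simp [wideForestSet] at hw
  rw [hf, Finset.sum_union hd, Finset.sum_image (by simp)]

lemma sum_wideForests (n : ℕ) (f : List PTree → ℂ) :
    ∑ cs ∈ wideForests n, f cs =
      ∑ i : Fin n, ∑ c ∈ trees i, ∑ cs ∈ forests (n - (i + 1)), f (c :: cs) := by
  simp_rw [← Finset.sum_product']
  rw [Finset.sum_sigma']
  refine (Finset.sum_nbij
    (fun s : Σ _ : Fin n, PTree × List PTree => s.2.1 :: s.2.2) ?_ ?_ ?_ fun _ _ => rfl).symm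
  · rintro ⟨i, c, cs⟩ h
    simp only [Finset.mem_sigma, Finset.mem_univ, Finset.mem_product, mem_trees, mem_forests,
      true_and] at h
    exact mem_wideForests.2 (cons_mem_wideForestSet.2 ⟨i, i.2, h⟩)
  · rintro ⟨i, c, cs⟩ h ⟨j, d, ds⟩ h' heq
    simp only [List.cons.injEq] at heq
    obtain ⟨rfl, rfl⟩ := heq
    simp only [Finset.coe_sigma, Set.mem_sigma_iff, Finset.mem_coe, Finset.mem_univ,
      Finset.mem_product, mem_trees, true_and] at h h'
    have h1 := h.1.2
    have h2 := h'.1.2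
    obtain rfl : i = j := Fin.ext (by omega)
    rfl
  · rintro (_ | ⟨c, cs⟩) h
    · simp [wideForestSet] at h
    · obtain ⟨i, hi, hc, hcs⟩ := cons_mem_wideForestSet.1 (mem_wideForests.1 h)
      exact ⟨⟨⟨i, hi⟩, c, cs⟩, by simpa using ⟨hc, hcs⟩, rfl⟩

variable {A : Type*} [Ring A]

/-- The sum of the weights of all Schröder trees whose sectors are labelled by the word. -/
noncomputable def treeSum (G : List A → ℂ) (w : List A) : ℂ :=
  ∑ t ∈ trees w.length, treeWeight G G t w

/-- The sum of the weights of all forests hanging from a root of weight `F`. -/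
noncomputable def forestSum (F G : List A → ℂ) (w : List A) : ℂ :=
  ∑ cs ∈ forests w.length, treeWeight F G (node cs) w

@[simp] lemma treeSum_nil (G : List A → ℂ) : treeSum G [] = 1 := by
  simp [treeSum, trees_zero]

lemma forestSum_eq_add (F G : List A → ℂ) (w : List A) :
    forestSum F G w = F [] * treeSum G w +
      ∑ cs ∈ wideForests w.length, treeWeight F G (node cs) w := by
  simp only [forestSum, sum_forests, treeWeight_singleton, treeSum, Finset.mul_sum]

lemma forestSum_eq (F G : List A → ℂ) (w : List A) :
    forestSum F G w = F [] * treeSum G w + ∑ i : Fin w.length,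
      treeSum G (w.take i) * forestSum (wordDeriv w[i] F) G (w.drop (i + 1)) := by
  rw [forestSum_eq_add, sum_wideForests]
  congr 1
  refine Finset.sum_congr rfl fun i _ => ?_
  have hl : (w.take i).length = i := by simp [i.2.le]
  rw [treeSum, forestSum, hl, List.length_drop, Finset.sum_mul_sum]
  refine Finset.sum_congr rfl fun c hc => Finset.sum_congr rfl fun cs hcs => ?_
  have hw : w = w.take i ++ w[i] :: w.drop (i + 1) := by simp
  conv_lhs => rw [hw]
  exact treeWeight_cons F G (mem_forests.1 hcs).1 (by rw [hl, (mem_trees.1 hc).2])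

lemma forestSum_eq_wordConv (F G : List A → ℂ) (w : List A) :
    forestSum F G w = wordConv (treeSum G) (wordSubst F (treeSum G)) w := by
  induction hn : w.length using Nat.strong_induction_on generalizing F w with
  | _ n ih =>
    rw [forestSum_eq, wordConv_wordSubst_self]
    congr 1
    refine Finset.sum_congr rfl fun i _ => ?_
    have := i.2
    rw [ih _ (by rw [List.length_drop]; omega) _ _ rfl]

lemma treeSum_cons (G : List A → ℂ) (x : A) (w : List A) :
    treeSum G (x :: w) = forestSum G G (x :: w) - G [] * treeSum G (x :: w) := by
  rw [forestSum_eq_add, add_sub_cancel_left, treeSum, List.length_cons, sum_trees_succ]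

lemma wordConv_treeSum_neg {M : List A → ℂ} (hM : M [] = 1) (w : List A) :
    wordConv (treeSum fun u => -M u) (wordSubst M (treeSum fun u => -M u)) w = wordUnit w := by
  have hneg : forestSum (fun u => -M u) (fun u => -M u) w =
      -wordConv (treeSum fun u => -M u) (wordSubst M (treeSum fun u => -M u)) w := by
    set S := treeSum fun u => -M u
    have h0 : wordSubst (fun u => -M u) S = fun u => -1 * wordSubst M S u := by
      funext u
      have := wordSubst_linear (-1) M (fun _ => 0) S u
      have hz := wordSubst_linear (-1) (fun _ => 0) (fun _ => 0) S u
      simp only [mul_zero, add_zero, neg_mul, one_mul, neg_add_cancel] at this hz ⊢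
      rw [this, hz, add_zero]
    rw [forestSum_eq_wordConv, h0, wordConv_smul_right, neg_one_mul]
  rcases w with _ | ⟨x, w⟩
  · simp [wordConv_nil, wordSubst_nil, hM, wordUnit]
  · have h1 := treeSum_cons (fun u => -M u) x w
    rw [hneg, hM] at h1
    rw [wordUnit]
    linear_combination h1

lemma treeWeight_neg (φ : A → ℂ) {t : PTree} (ht : IsInternalAt t []) (w : List A) :
    treeWeight (fun u => φ u.prod) (fun u => -φ u.prod) t w =
      (-1) ^ (numInternal t - 1) * phiPi φ t w := by
  have hfin := finite_isInternalAt t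
  have hcard : numInternal t = hfin.toFinset.card := by
    rw [← Set.ncard_eq_toFinset_card _ hfin]
    exact Nat.card_coe_set_eq _
  have hmem : [] ∈ hfin.toFinset := by simpa using ht
  rw [phiPi, treeWeight, finprod_mem_eq_finite_toFinset_prod _ hfin,
    finprod_mem_eq_finite_toFinset_prod _ hfin, ← Finset.mul_prod_erase _ _ hmem,
    ← Finset.mul_prod_erase (a := []) _ _ hmem, hcard, ← Finset.card_erase_of_mem hmem,
    ← Finset.prod_const, mul_left_comm, ← Finset.prod_mul_distrib, if_pos rfl]
  refine congrArg₂ _ rfl (Finset.prod_congr rfl fun v hv => ?_)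
  rw [if_neg (Finset.ne_of_mem_erase hv), neg_one_mul]
  rfl

lemma finsum_isPST (n : ℕ) (f : PTree → ℂ) :
    ∑ᶠ t ∈ {t | IsPST t ∧ t ∈ ST (n + 1)}, f t = ∑ cs ∈ forests n, f (node (leaf :: cs)) := by
  have h : {t | IsPST t ∧ t ∈ ST (n + 1)} = (fun cs => node (leaf :: cs)) '' forestSet n := by
    ext t
    have hmem (cs : List PTree) : leaf :: cs ∈ wideForestSet (n + 1) ↔ cs ∈ forestSet n := by
      rw [cons_mem_wideForestSet]
      constructor
      · rintro ⟨i, hi, hc, hcs⟩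
        obtain rfl : i = 0 := by simpa [eq_comm] using hc.2
        simpa using hcs
      · exact fun h => ⟨0, by omega, by simp, by simpa using h⟩
    simp only [Set.mem_ofPred_eq, IsPST, ST_succ, Set.mem_image]
    constructor
    · rintro ⟨⟨cs, rfl⟩, _, hcs, h⟩
      exact ⟨cs, (hmem cs).1 (node.inj h ▸ hcs), rfl⟩
    · rintro ⟨cs, hcs, rfl⟩
      exact ⟨⟨cs, rfl⟩, _, (hmem cs).2 hcs, rfl⟩
  rw [h, finsum_mem_image (by intro a _ b _; simp), forests,
    finsum_mem_eq_finite_toFinset_sum]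

end PTree

/-- Free cumulants in terms of moments indexed by the Schröder trees
in `PST(n)` (those whose leftmost child of the root is a leaf):
`r_n(a_1,…,a_n) = Σ_{t ∈ PST(n)} (−1)^{i(t)−1} φ_{π(t)}(a_1,…,a_n)`. -/
theorem free_cumulants_eq_sum_PST_trees
    (A : Type*) [Ring A] [Algebra ℂ A] (φ : A →ₗ[ℂ] ℂ) (hφ : φ 1 = 1)
    (r : List A → ℂ) (hmc : FreeMC (fun x => φ x) r)
    (n : ℕ) (hn : 1 ≤ n) (a : Fin n → A) :
    r (List.ofFn a) =
      ∑ᶠ t ∈ {t | PTree.IsPST t ∧ t ∈ PTree.ST n},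
        (-1 : ℂ) ^ (PTree.numInternal t - 1) * PTree.phiPi (fun x => φ x) t (List.ofFn a) := by
  obtain ⟨m, rfl⟩ : ∃ m, n = m + 1 := ⟨n - 1, by omega⟩
  obtain ⟨x, w, hw⟩ : ∃ x w, List.ofFn a = x :: w := ⟨_, _, List.ofFn_succ⟩
  have hwl : w.length = m := by
    have := congrArg List.length hw
    simpa using this.symm
  set M : List A → ℂ := fun u => φ u.prod
  have hM : M [] = 1 := by simpa [M] using hφ
  rw [hw, PTree.finsum_isPST]
  calc r (x :: w)
      = wordSubst M (PTree.treeSum fun u => -M u) (x :: w) :=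
        FreeMC.unitalCumulant_eq (φ := fun y => φ y) hφ hmc (PTree.wordConv_treeSum_neg hM) (x :: w)
    _ = PTree.forestSum (wordDeriv x M) (fun u => -M u) w := by
        rw [wordSubst_cons, PTree.forestSum_eq_wordConv]
    _ = _ := by
        rw [PTree.forestSum, hwl]
        refine Finset.sum_congr rfl fun cs hcs => ?_
        have h := PTree.treeWeight_cons (u := []) (x := x) (v := w) M (fun u => -M u)
          (PTree.mem_forests.1 hcs).1 (c := PTree.leaf) (by simp)
        rw [PTree.treeWeight_leaf, one_mul, List.nil_append] at h
        rw [← h]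
        exact PTree.treeWeight_neg (fun y => φ y) PTree.isInternalAt_cons_nil (x :: w)
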